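/- arXiv:1910.05648 — 4 statements merged into one kernel-verified Lean document; each statement's English description precedes it below -/
import Mathlib

section
/- For every integer r ≥ 1, the set of finite sums ∑_{i=1}^N p_i · ∇q_i, where N ∈ ℕ and p_i, q_i are real polynomials in 2 variables of total degree at most r and ∇q = (∂q/∂x₁, ∂q/∂x₂) is the gradient (the pair of partial derivatives), is exactly the set of pairs (v₁, v₂) of real polynomials in 2 variables, each of total degree at most 2r − 1. -/
open MvPolynomial in
/-- The span of the products `p ∇ q`. -/
noncomputable def pgradSpan (r : ℕ) :
    Submodule ℝ (MvPolynomial (Fin 2) ℝ × MvPolynomial (Fin 2) ℝ) :=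
  Submodule.span ℝ {v | ∃ p q : MvPolynomial (Fin 2) ℝ, p.totalDegree ≤ r ∧ q.totalDegree ≤ r ∧
    v = (p * pderiv 0 q, p * pderiv 1 q)}

open MvPolynomial in
theorem pgrad_deg (a b : ℕ) :
    ((X 0 ^ a * X 1 ^ b : MvPolynomial (Fin 2) ℝ)).totalDegree ≤ a + b := by
  refine (totalDegree_mul _ _).trans ?_
  simp [totalDegree_X_pow]

open MvPolynomial in
theorem pgrad_mono (r a b c e : ℕ) (h1 : a + b ≤ r) (h2 : c + e ≤ r) :
    ((X 0 ^ a * X 1 ^ b * (C (c : ℝ) * X 0 ^ (c - 1) * X 1 ^ e),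
      X 0 ^ a * X 1 ^ b * (C (e : ℝ) * X 0 ^ c * X 1 ^ (e - 1))) :
      MvPolynomial (Fin 2) ℝ × MvPolynomial (Fin 2) ℝ) ∈ pgradSpan r := by
  refine Submodule.subset_span ⟨X 0 ^ a * X 1 ^ b, X 0 ^ c * X 1 ^ e,
    (pgrad_deg a b).trans h1, (pgrad_deg c e).trans h2, ?_⟩
  have h01 : pderiv (0 : Fin 2) (X 1 : MvPolynomial (Fin 2) ℝ) = 0 :=
    pderiv_X_of_ne (by decide)
  have h10 : pderiv (1 : Fin 2) (X 0 : MvPolynomial (Fin 2) ℝ) = 0 :=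
    pderiv_X_of_ne (by decide)
  ext1
  · simp [Derivation.leibniz, Derivation.leibniz_pow, h01]
    ring
  · simp [Derivation.leibniz, Derivation.leibniz_pow, h10]
    ring

open MvPolynomial in
theorem pgrad_pair (r a b c e : ℕ) (h1 : a + b + 1 ≤ r) (h2 : c + e + 1 ≤ r) :
    ((X 0 ^ (a + c) * X 1 ^ (b + e + 1), 0) :
      MvPolynomial (Fin 2) ℝ × MvPolynomial (Fin 2) ℝ) ∈ pgradSpan r ∧
    ((0, X 0 ^ (a + c + 1) * X 1 ^ (b + e)) :
      MvPolynomial (Fin 2) ℝ × MvPolynomial (Fin 2) ℝ) ∈ pgradSpan r := by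
  have v1 := pgrad_mono r (a + 1) b c (e + 1) (by omega) (by omega)
  have v2 := pgrad_mono r a (b + 1) (c + 1) e (by omega) (by omega)
  have hs : ((c : ℝ) + e + 1) ≠ 0 := by positivity
  have hc : (C (c : ℝ) : MvPolynomial (Fin 2) ℝ) * (X 0 ^ (a + 1) * X 0 ^ (c - 1))
      = C (c : ℝ) * X 0 ^ (a + c) := by
    cases c with
    | zero => simp
    | succ c => rw [Nat.add_sub_cancel]; ring
  have he : (C (e : ℝ) : MvPolynomial (Fin 2) ℝ) * (X 1 ^ (b + 1) * X 1 ^ (e - 1))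
      = C (e : ℝ) * X 1 ^ (b + e) := by
    cases e with
    | zero => simp
    | succ c => rw [Nat.add_sub_cancel]; ring
  have w1 : ((C (c : ℝ) * (X 0 ^ (a + c) * X 1 ^ (b + e + 1)),
      C ((e : ℝ) + 1) * (X 0 ^ (a + c + 1) * X 1 ^ (b + e))) :
      MvPolynomial (Fin 2) ℝ × MvPolynomial (Fin 2) ℝ) ∈ pgradSpan r := by
    convert v1 using 2
    · linear_combination (-X 1 ^ (b + e + 1)) * hc
    · push_cast; ring
  have w2 : ((C ((c : ℝ) + 1) * (X 0 ^ (a + c) * X 1 ^ (b + e + 1)),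
      C (e : ℝ) * (X 0 ^ (a + c + 1) * X 1 ^ (b + e))) :
      MvPolynomial (Fin 2) ℝ × MvPolynomial (Fin 2) ℝ) ∈ pgradSpan r := by
    convert v2 using 2
    · push_cast; ring
    · linear_combination (-X 0 ^ (a + c + 1)) * he
  simp only [← smul_eq_C_mul] at w1 w2
  constructor
  · have := (pgradSpan r).smul_mem (((c : ℝ) + e + 1)⁻¹)
      ((pgradSpan r).sub_mem ((pgradSpan r).smul_mem ((e : ℝ) + 1) w2)
        ((pgradSpan r).smul_mem (e : ℝ) w1))
    convert this using 1
    ext1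
    · simp only [Prod.smul_fst, Prod.fst_sub, smul_smul, ← sub_smul]
      rw [show ((c : ℝ) + e + 1)⁻¹ * (((e : ℝ) + 1) * (c + 1) - e * c) = 1 by
        field_simp; ring, one_smul]
    · simp only [Prod.smul_snd, Prod.snd_sub, smul_smul, ← sub_smul]
      rw [show ((c : ℝ) + e + 1)⁻¹ * (((e : ℝ) + 1) * e - e * (e + 1)) = 0 by ring, zero_smul]
  · have := (pgradSpan r).smul_mem (((c : ℝ) + e + 1)⁻¹)
      ((pgradSpan r).sub_mem ((pgradSpan r).smul_mem ((c : ℝ) + 1) w1)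
        ((pgradSpan r).smul_mem (c : ℝ) w2))
    convert this using 1
    ext1
    · simp only [Prod.smul_fst, Prod.fst_sub, smul_smul, ← sub_smul]
      rw [show ((c : ℝ) + e + 1)⁻¹ * (((c : ℝ) + 1) * c - c * (c + 1)) = 0 by ring, zero_smul]
    · simp only [Prod.smul_snd, Prod.snd_sub, smul_smul, ← sub_smul]
      rw [show ((c : ℝ) + e + 1)⁻¹ * (((c : ℝ) + 1) * (e + 1) - c * e) = 1 by
        field_simp; ring, one_smul]

/-- Splitting of the exponents. -/
theorem pgrad_split (r A B : ℕ) (h : A + B + 2 ≤ 2 * r) :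
    ∃ a b c e : ℕ, a + c = A ∧ b + e = B ∧ a + b + 1 ≤ r ∧ c + e + 1 ≤ r := by
  by_cases h1 : A + 1 ≤ r
  · by_cases h2 : A + B + 1 ≤ r
    · exact ⟨0, 0, A, B, by omega, by omega, by omega, by omega⟩
    · exact ⟨0, B - (r - 1 - A), A, r - 1 - A, by omega, by omega, by omega, by omega⟩
  · exact ⟨A - (r - 1), B, r - 1, 0, by omega, by omega, by omega, by omega⟩

open MvPolynomial in
theorem pgrad_fst (r i j : ℕ) (h : i + j + 1 ≤ 2 * r) :
    ((X 0 ^ i * X 1 ^ j, 0) :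
      MvPolynomial (Fin 2) ℝ × MvPolynomial (Fin 2) ℝ) ∈ pgradSpan r := by
  cases j with
  | succ j =>
    obtain ⟨a, b, c, e, rfl, rfl, h1, h2⟩ := pgrad_split r i j (by omega)
    exact (pgrad_pair r a b c e h1 h2).1
  | zero =>
    obtain ⟨a, c, rfl, ha, hc⟩ : ∃ a c : ℕ, a + c = i ∧ a ≤ r ∧ c + 1 ≤ r := by
      by_cases hi : i ≤ r
      · exact ⟨i, 0, by omega, by omega, by omega⟩
      · exact ⟨r, i - r, by omega, by omega, by omega⟩
    have := (pgradSpan r).smul_mem (((c : ℝ) + 1)⁻¹)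
      (pgrad_mono r a 0 (c + 1) 0 (by omega) (by omega))
    have hs : ((c : ℝ) + 1) ≠ 0 := by positivity
    convert this using 1
    ext1
    · simp only [Prod.smul_fst, smul_eq_C_mul, Nat.add_sub_cancel]
      have : (C (((c : ℝ) + 1)⁻¹) : MvPolynomial (Fin 2) ℝ) * C ((c + 1 : ℕ) : ℝ) = 1 := by
        rw [← C_mul]; push_cast; rw [inv_mul_cancel₀ hs, C_1]
      linear_combination (-X 0 ^ (a + c)) * this
    · simp

open MvPolynomial in
theorem pgrad_snd (r i j : ℕ) (h : i + j + 1 ≤ 2 * r) :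
    ((0, X 0 ^ i * X 1 ^ j) :
      MvPolynomial (Fin 2) ℝ × MvPolynomial (Fin 2) ℝ) ∈ pgradSpan r := by
  cases i with
  | succ i =>
    obtain ⟨a, b, c, e, rfl, rfl, h1, h2⟩ := pgrad_split r i j (by omega)
    exact (pgrad_pair r a b c e h1 h2).2
  | zero =>
    obtain ⟨a, c, rfl, ha, hc⟩ : ∃ a c : ℕ, a + c = j ∧ a ≤ r ∧ c + 1 ≤ r := by
      by_cases hi : j ≤ r
      · exact ⟨j, 0, by omega, by omega, by omega⟩
      · exact ⟨r, j - r, by omega, by omega, by omega⟩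
    have := (pgradSpan r).smul_mem (((c : ℝ) + 1)⁻¹)
      (pgrad_mono r 0 a 0 (c + 1) (by omega) (by omega))
    have hs : ((c : ℝ) + 1) ≠ 0 := by positivity
    convert this using 1
    ext1
    · simp
    · simp only [Prod.smul_snd, smul_eq_C_mul, Nat.add_sub_cancel]
      have : (C (((c : ℝ) + 1)⁻¹) : MvPolynomial (Fin 2) ℝ) * C ((c + 1 : ℕ) : ℝ) = 1 := by
        rw [← C_mul]; push_cast; rw [inv_mul_cancel₀ hs, C_1]
      linear_combination (-X 1 ^ (a + c)) * this

open MvPolynomial in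
theorem pgrad_map (d : ℕ) (S : Submodule ℝ (MvPolynomial (Fin 2) ℝ))
    (hS : ∀ i j : ℕ, i + j ≤ d → (X 0 ^ i * X 1 ^ j : MvPolynomial (Fin 2) ℝ) ∈ S)
    (p : MvPolynomial (Fin 2) ℝ) (hp : p.totalDegree ≤ d) : p ∈ S := by
  rw [p.as_sum]
  refine S.sum_mem fun m hm => ?_
  have h := (le_totalDegree hm).trans hp
  rw [Finsupp.sum_fintype _ _ (fun _ => rfl), Fin.sum_univ_two] at h
  rw [monomial_eq, Finsupp.prod_fintype _ _ (fun _ => pow_zero _), Fin.prod_univ_two,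
    ← smul_eq_C_mul]
  exact S.smul_mem _ (hS _ _ h)

open MvPolynomial in
theorem pgrad_pderiv_deg (k : Fin 2) (q : MvPolynomial (Fin 2) ℝ) :
    (pderiv k q).totalDegree ≤ q.totalDegree - 1 := by
  conv_lhs => rw [q.as_sum, map_sum]
  refine totalDegree_finsetSum_le fun m hm => ?_
  rw [pderiv_monomial]
  by_cases hk : m k = 0
  · simp [hk]
  refine (totalDegree_monomial_le _ _).trans ?_
  have h := le_totalDegree hm
  have h2 : m - Finsupp.single k 1 + Finsupp.single k 1 = m :=
    tsub_add_cancel_of_le (by simpa using Nat.one_le_iff_ne_zero.2 hk)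
  have h3 : (m.sum fun _ e => e) = ((m - Finsupp.single k 1).sum fun _ e => e) + 1 := by
    conv_lhs => rw [← h2]
    rw [Finsupp.sum_add_index' (by simp) (by simp)]
    simp
  show ((m - Finsupp.single k 1).sum fun _ e => e) ≤ _
  omega

/-- Lemma C.2 of the paper for `n = 2`: for `r ≥ 1`, the set of finite sums
`∑ᵢ pᵢ ∇qᵢ` with `pᵢ, qᵢ` real polynomials in two variables of total degree at
most `r` is exactly the set of pairs of real polynomials in two variables of
total degree at most `2r - 1`. -/
theorem sums_of_p_grad_q_two_vars (r : ℕ) (hr : 1 ≤ r) :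
    {v : MvPolynomial (Fin 2) ℝ × MvPolynomial (Fin 2) ℝ |
      ∃ (N : ℕ) (p q : Fin N → MvPolynomial (Fin 2) ℝ),
        (∀ i, (p i).totalDegree ≤ r) ∧ (∀ i, (q i).totalDegree ≤ r) ∧
        v.1 = ∑ i, p i * MvPolynomial.pderiv 0 (q i) ∧
        v.2 = ∑ i, p i * MvPolynomial.pderiv 1 (q i)} =
    {v : MvPolynomial (Fin 2) ℝ × MvPolynomial (Fin 2) ℝ |
      v.1.totalDegree ≤ 2 * r - 1 ∧ v.2.totalDegree ≤ 2 * r - 1} := by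
  ext v
  simp only [Set.mem_ofPred_eq]
  constructor
  · rintro ⟨N, p, q, hp, hq, h1, h2⟩
    have key : ∀ k : Fin 2,
        (∑ i, p i * MvPolynomial.pderiv k (q i)).totalDegree ≤ 2 * r - 1 := by
      intro k
      refine MvPolynomial.totalDegree_finsetSum_le fun i _ => ?_
      have a1 := MvPolynomial.totalDegree_mul (p i) (MvPolynomial.pderiv k (q i))
      have a2 := pgrad_pderiv_deg k (q i)
      have a3 := hp i
      have a4 := hq i
      omega
    rw [h1, h2]
    exact ⟨key 0, key 1⟩
  · rintro ⟨h1, h2⟩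
    have m1 : v.1 ∈ (pgradSpan r).comap (LinearMap.inl ℝ _ _) :=
      pgrad_map (2 * r - 1) _ (fun i j h => pgrad_fst r i j (by omega)) _ h1
    have m2 : v.2 ∈ (pgradSpan r).comap (LinearMap.inr ℝ _ _) :=
      pgrad_map (2 * r - 1) _ (fun i j h => pgrad_snd r i j (by omega)) _ h2
    have hv : v ∈ pgradSpan r := by
      have := (pgradSpan r).add_mem m1 m2
      simpa using this
    obtain ⟨N, f, g, hfg⟩ := Submodule.mem_span_set'.1 hv
    choose p q hp hq hg using fun i => (g i).2
    refine ⟨N, fun i => f i • p i, q, fun i => (MvPolynomial.totalDegree_smul_le _ _).trans (hp i),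
      hq, ?_, ?_⟩
    · rw [← hfg, Prod.fst_sum]
      refine Finset.sum_congr rfl fun i _ => ?_
      rw [Prod.smul_fst, hg i, smul_mul_assoc]
    · rw [← hfg, Prod.snd_sum]
      refine Finset.sum_congr rfl fun i _ => ?_
      rw [Prod.smul_snd, hg i, smul_mul_assoc]
end

section
/- For every integer r ≥ 1, the set of finite sums ∑_{i=1}^N p_i · ∇q_i, where N ∈ ℕ and p_i, q_i are real polynomials in 3 variables of total degree at most r and ∇q = (∂q/∂x₁, ∂q/∂x₂, ∂q/∂x₃) is the gradient (the triple of partial derivatives), is exactly the set of triples (v₁, v₂, v₃) of real polynomials in 3 variables, each of total degree at most 2r − 1. -/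
open MvPolynomial in
lemma pgq_totalDegree_pderiv (j : Fin 3) (q : MvPolynomial (Fin 3) ℝ) :
    (pderiv j q).totalDegree ≤ q.totalDegree - 1 := by
  conv_lhs => rw [q.as_sum, map_sum]
  apply totalDegree_finsetSum_le
  intro s hs
  rw [pderiv_monomial]
  by_cases h : s j = 0
  · simp [h]
  · refine (totalDegree_monomial_le _ _).trans ?_
    have h1 : s.degree ≤ q.totalDegree := le_totalDegree hs
    have h2 : (s - Finsupp.single j 1) + Finsupp.single j 1 = s :=
      tsub_add_cancel_of_le (by simpa [Finsupp.single_le_iff] using Nat.one_le_iff_ne_zero.2 h)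
    have h3 := congrArg Finsupp.degree h2
    rw [map_add, Finsupp.degree_single] at h3
    change (s - Finsupp.single j 1).degree ≤ _
    omega

/-- The span of the products `p ∇q`. -/
noncomputable def pgqSpan (r : ℕ) : Submodule ℝ (Fin 3 → MvPolynomial (Fin 3) ℝ) :=
  Submodule.span ℝ {v | ∃ p q : MvPolynomial (Fin 3) ℝ, p.totalDegree ≤ r ∧ q.totalDegree ≤ r ∧
    v = fun j => p * MvPolynomial.pderiv j q}

/-- The basis vectors of multiweight `m`. -/
noncomputable def pgqW (m : Fin 3 →₀ ℕ) (k : Fin 3) : Fin 3 → MvPolynomial (Fin 3) ℝ :=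
  Pi.single k (MvPolynomial.monomial (m - Finsupp.single k 1) 1)

open MvPolynomial in
lemma pgq_mem (r : ℕ) (b g : Fin 3 →₀ ℕ) (hb : b.degree ≤ r) (hg : g.degree ≤ r) :
    ∑ k, (g k : ℝ) • pgqW (b + g) k ∈ pgqSpan r := by
  apply Submodule.subset_span
  refine ⟨monomial b 1, monomial g 1, (totalDegree_monomial_le _ _).trans hb,
    (totalDegree_monomial_le _ _).trans hg, ?_⟩
  funext j
  rw [Finset.sum_apply, Finset.sum_eq_single j]
  · rw [pderiv_monomial, monomial_mul, Pi.smul_apply, pgqW, Pi.single_eq_same, smul_monomial]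
    by_cases h : g j = 0
    · simp [h]
    · rw [add_tsub_assoc_of_le (by simpa [Finsupp.single_le_iff] using Nat.one_le_iff_ne_zero.2 h)]
      simp
  · intro k _ hk
    simp [pgqW, Pi.single_eq_of_ne (Ne.symm hk)]
  · simp

lemma pgq_diff (r : ℕ) (hr : 1 ≤ r) (m : Fin 3 →₀ ℕ) (h1 : r + 1 ≤ m.degree)
    (h2 : m.degree ≤ 2 * r) (j k : Fin 3) (hj : m j ≠ 0) (hk : m k ≠ 0) :
    pgqW m k - pgqW m j ∈ pgqSpan r := by
  by_cases hjk : j = k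
  · subst hjk; simp
  have hle : Finsupp.single j 1 + Finsupp.single k 1 ≤ m := by
    intro i
    simp only [Finsupp.add_apply, Finsupp.single_apply]
    split_ifs <;> subst_vars <;> first | omega | exact absurd rfl hjk
  obtain ⟨m', rfl⟩ := exists_add_of_le hle
  simp only [map_add, Finsupp.degree_single] at h1 h2
  obtain ⟨d, hd, hdr⟩ := Finsupp.exists_le_degree_eq m' (r - 1) (by omega)
  obtain ⟨b, rfl⟩ := exists_add_of_le hd
  simp only [map_add] at h1 h2
  have e1 := pgq_mem r (b + Finsupp.single j 1) (d + Finsupp.single k 1)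
    (by simp; omega) (by simp; omega)
  have e2 := pgq_mem r (b + Finsupp.single k 1) (d + Finsupp.single j 1)
    (by simp; omega) (by simp; omega)
  have a1 : b + Finsupp.single j 1 + (d + Finsupp.single k 1) =
    Finsupp.single j 1 + Finsupp.single k 1 + (d + b) := by abel
  have a2 : b + Finsupp.single k 1 + (d + Finsupp.single j 1) =
    Finsupp.single j 1 + Finsupp.single k 1 + (d + b) := by abel
  rw [a1] at e1
  rw [a2] at e2
  have := Submodule.sub_mem _ e1 e2
  convert this using 1
  simp [add_smul, Finset.sum_add_distrib, Finsupp.single_apply]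

lemma pgq_high (r : ℕ) (hr : 1 ≤ r) (m : Fin 3 →₀ ℕ) (h1 : r + 1 ≤ m.degree)
    (h2 : m.degree ≤ 2 * r) (j : Fin 3) (hj : m j ≠ 0) :
    pgqW m j ∈ pgqSpan r := by
  obtain ⟨g, hg, hgr⟩ := Finsupp.exists_le_degree_eq m r (by omega)
  obtain ⟨b, hb⟩ := exists_add_of_le hg
  have hbd : b.degree ≤ r := by
    have := congrArg Finsupp.degree hb
    rw [map_add] at this
    omega
  have e1 := pgq_mem r b g hbd hgr.le
  rw [add_comm b g, ← hb] at e1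
  have e2 : ∑ k, (g k : ℝ) • (pgqW m k - pgqW m j) ∈ pgqSpan r := by
    refine Submodule.sum_mem _ fun k _ => ?_
    by_cases hk : g k = 0
    · simp [hk]
    · have : g k ≤ m k := hg k
      exact Submodule.smul_mem _ _ (pgq_diff r hr m h1 h2 j k hj (by omega))
  have e3 := Submodule.sub_mem _ e1 e2
  rw [← Finset.sum_sub_distrib] at e3
  have e4 : ∑ k, ((g k : ℝ) • pgqW m k - (g k : ℝ) • (pgqW m k - pgqW m j))
      = (r : ℝ) • pgqW m j := by
    rw [← hgr, Finsupp.degree_eq_sum, Nat.cast_sum, Finset.sum_smul]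
    refine Finset.sum_congr rfl fun k _ => ?_
    rw [smul_sub, sub_sub_cancel]
  rw [e4] at e3
  exact (Submodule.smul_mem_iff _ (by positivity)).1 e3

lemma pgq_all (r : ℕ) (hr : 1 ≤ r) (a : Fin 3 →₀ ℕ) (ha : a.degree ≤ 2 * r - 1) (j : Fin 3) :
    (Pi.single j (MvPolynomial.monomial a 1) : Fin 3 → MvPolynomial (Fin 3) ℝ) ∈ pgqSpan r := by
  have hw : pgqW (a + Finsupp.single j 1) j = Pi.single j (MvPolynomial.monomial a 1) := by
    rw [pgqW, add_tsub_cancel_right]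
  rw [← hw]
  by_cases h : a.degree ≤ r
  · have := pgq_mem r a (Finsupp.single j 1) h (by simpa using hr)
    simpa [Finsupp.single_apply] using this
  · exact pgq_high r hr _ (by simp; omega) (by simp; omega) j (by simp)

lemma pgq_span_top (r : ℕ) (hr : 1 ≤ r) (v : Fin 3 → MvPolynomial (Fin 3) ℝ)
    (hv : ∀ j, (v j).totalDegree ≤ 2 * r - 1) : v ∈ pgqSpan r := by
  rw [← Finset.univ_sum_single v]
  refine Submodule.sum_mem _ fun j _ => ?_
  have : (Pi.single j (v j) : Fin 3 → MvPolynomial (Fin 3) ℝ) =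
      ∑ s ∈ (v j).support, (v j).coeff s •
        (Pi.single j (MvPolynomial.monomial s 1) : Fin 3 → MvPolynomial (Fin 3) ℝ) := by
    conv_lhs => rw [(v j).as_sum]
    rw [← LinearMap.coe_single (R := ℝ), map_sum]
    refine Finset.sum_congr rfl fun s _ => ?_
    rw [← map_smul, MvPolynomial.smul_monomial]
    simp
  rw [this]
  refine Submodule.sum_mem _ fun s hs => Submodule.smul_mem _ _ (pgq_all r hr s ?_ j)
  exact (MvPolynomial.le_totalDegree hs).trans (hv j)

/-- Lemma C.2 of the paper for `n = 3`: for `r ≥ 1`, the set of finite sums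
`∑ᵢ pᵢ ∇qᵢ` with `pᵢ, qᵢ` real polynomials in three variables of total degree at
most `r` is exactly the set of triples of real polynomials in three variables of
total degree at most `2r - 1`. -/
theorem sums_of_p_grad_q_three_vars (r : ℕ) (hr : 1 ≤ r) :
    {v : Fin 3 → MvPolynomial (Fin 3) ℝ |
      ∃ (N : ℕ) (p q : Fin N → MvPolynomial (Fin 3) ℝ),
        (∀ i, (p i).totalDegree ≤ r) ∧ (∀ i, (q i).totalDegree ≤ r) ∧
        ∀ j : Fin 3, v j = ∑ i, p i * MvPolynomial.pderiv j (q i)} =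
    {v : Fin 3 → MvPolynomial (Fin 3) ℝ |
      ∀ j : Fin 3, (v j).totalDegree ≤ 2 * r - 1} := by
  ext v
  simp only [Set.mem_setOf_eq]
  constructor
  · rintro ⟨N, p, q, hp, hq, hv⟩ j
    rw [hv j]
    apply MvPolynomial.totalDegree_finsetSum_le
    intro i _
    refine (MvPolynomial.totalDegree_mul _ _).trans ?_
    have h1 := pgq_totalDegree_pderiv j (q i)
    have h2 := hp i
    have h3 := hq i
    omega
  · intro hv
    have h := pgq_span_top r hr v hv
    obtain ⟨N, f, g, hfg⟩ := Submodule.mem_span_set'.1 h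
    choose p q hp hq hpq using fun i => (g i).2
    refine ⟨N, fun i => f i • p i, q,
      fun i => (MvPolynomial.totalDegree_smul_le _ _).trans (hp i), hq, fun j => ?_⟩
    rw [← hfg, Finset.sum_apply]
    refine Finset.sum_congr rfl fun i _ => ?_
    rw [Pi.smul_apply, hpq i, smul_mul_assoc]
end

section
/- Let (Ω, μ) be a measure space, n ≥ 1 an integer, and Δt > 0 a real number. Let u₀, u₁, R : Ω → ℝⁿ and D₀, D₁, Φ, E₀, E₁, F, G : Ω → ℝ be measurable functions such that every product of these functions appearing below is μ-integrable, and set u_{1/2} := (u₀ + u₁)/2. Assume: (i) the discrete-gradient relation (D₁ − D₀)·F = (D₁ − D₀)·( (1/2) u₀·u₁ + u_{1/2}·R − Φ ) − (E₁ − E₀) holds μ-almost everywhere; (ii) the discrete momentum equation tested at u_{1/2} holds: (1/Δt) ∫_Ω ( D₁ (u₁ + R) − D₀ (u₀ + R) ) · u_{1/2} dμ + ∫_Ω F·G dμ = 0; (iii) the discrete continuity equation tested at F holds: ∫_Ω ((D₁ − D₀)/Δt)·F dμ + ∫_Ω G·F dμ = 0. Then the total energy is preserved: ∫_Ω ( (1/2)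 D₁ |u₁|² + E₁ + D₁ Φ ) dμ = ∫_Ω ( (1/2) D₀ |u₀|² + E₀ + D₀ Φ ) dμ. -/
open MeasureTheory
open scoped RealInnerProductSpace

/-- Energy preservation of the variational time discretization of the rotating
barotropic compressible fluid (Proposition of Section 5 of the paper). -/
theorem energy_preservation_rotating_barotropic
    {Ω : Type*} [MeasurableSpace Ω] (μ : Measure Ω) (n : ℕ) (hn : 1 ≤ n)
    (Δt : ℝ) (hΔt : 0 < Δt)
    (u₀ u₁ R : Ω → EuclideanSpace ℝ (Fin n))
    (D₀ D₁ Φ E₀ E₁ F G : Ω → ℝ)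
    (hu₀ : Measurable u₀) (hu₁ : Measurable u₁) (hR : Measurable R)
    (hD₀ : Measurable D₀) (hD₁ : Measurable D₁) (hΦ : Measurable Φ)
    (hE₀ : Measurable E₀) (hE₁ : Measurable E₁)
    (hF : Measurable F) (hG : Measurable G)
    -- integrability of every product of these functions appearing below
    (hint₁ : Integrable (fun x => D₀ x * ‖u₀ x‖ ^ 2) μ)
    (hint₂ : Integrable (fun x => D₁ x * ‖u₁ x‖ ^ 2) μ)
    (hint₃ : Integrable (fun x => D₀ x * ⟪u₀ x, u₁ x⟫) μ)
    (hint₄ : Integrable (fun x => D₁ x * ⟪u₀ x, u₁ x⟫) μ)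
    (hint₅ : Integrable (fun x => D₀ x * ⟪u₀ x, R x⟫) μ)
    (hint₆ : Integrable (fun x => D₀ x * ⟪u₁ x, R x⟫) μ)
    (hint₇ : Integrable (fun x => D₁ x * ⟪u₀ x, R x⟫) μ)
    (hint₈ : Integrable (fun x => D₁ x * ⟪u₁ x, R x⟫) μ)
    (hint₉ : Integrable (fun x => D₀ x * Φ x) μ)
    (hint₁₀ : Integrable (fun x => D₁ x * Φ x) μ)
    (hintE₀ : Integrable E₀ μ) (hintE₁ : Integrable E₁ μ)
    (hintFG : Integrable (fun x => F x * G x) μ)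
    (hintD₀F : Integrable (fun x => D₀ x * F x) μ)
    (hintD₁F : Integrable (fun x => D₁ x * F x) μ)
    -- (i) the discrete-gradient relation, μ-almost everywhere
    (hi : ∀ᵐ x ∂μ, (D₁ x - D₀ x) * F x =
      (D₁ x - D₀ x) * ((1 / 2) * ⟪u₀ x, u₁ x⟫
        + ⟪(1 / 2 : ℝ) • (u₀ x + u₁ x), R x⟫ - Φ x) - (E₁ x - E₀ x))
    -- (ii) the discrete momentum equation tested at `u_{1/2}`
    (hii : (1 / Δt) * ∫ x, ⟪D₁ x • (u₁ x + R x) - D₀ x • (u₀ x + R x),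
        (1 / 2 : ℝ) • (u₀ x + u₁ x)⟫ ∂μ + ∫ x, F x * G x ∂μ = 0)
    -- (iii) the discrete continuity equation tested at `F`
    (hiii : ∫ x, (D₁ x - D₀ x) / Δt * F x ∂μ + ∫ x, G x * F x ∂μ = 0) :
    ∫ x, ((1 / 2) * D₁ x * ‖u₁ x‖ ^ 2 + E₁ x + D₁ x * Φ x) ∂μ =
    ∫ x, ((1 / 2) * D₀ x * ‖u₀ x‖ ^ 2 + E₀ x + D₀ x * Φ x) ∂μ := by
  have hN : Integrable (fun x => (D₁ x - D₀ x) * F x) μ :=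
    (hintD₁F.sub hintD₀F).congr (Filter.Eventually.of_forall fun x => by
      simp only [Pi.sub_apply]; ring)
  have h1 : Integrable (fun x => (1 / 2) * D₁ x * ‖u₁ x‖ ^ 2 + E₁ x + D₁ x * Φ x) μ :=
    (((hint₂.const_mul (1 / 2)).add hintE₁).add hint₁₀).congr
      (Filter.Eventually.of_forall fun x => by simp only [Pi.add_apply]; ring)
  have h0 : Integrable (fun x => (1 / 2) * D₀ x * ‖u₀ x‖ ^ 2 + E₀ x + D₀ x * Φ x) μ :=
    (((hint₁.const_mul (1 / 2)).add hintE₀).add hint₉).congr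
      (Filter.Eventually.of_forall fun x => by simp only [Pi.add_apply]; ring)
  have hM : ∫ x, ⟪D₁ x • (u₁ x + R x) - D₀ x • (u₀ x + R x),
        (1 / 2 : ℝ) • (u₀ x + u₁ x)⟫ ∂μ =
      ∫ x, (((D₁ x - D₀ x) * F x + ((1 / 2) * D₁ x * ‖u₁ x‖ ^ 2 + E₁ x + D₁ x * Φ x))
        - ((1 / 2) * D₀ x * ‖u₀ x‖ ^ 2 + E₀ x + D₀ x * Φ x)) ∂μ := by
    apply integral_congr_ae
    filter_upwards [hi] with x hx
    rw [hx]
    simp only [inner_sub_left, inner_add_left, inner_add_right, real_inner_smul_left,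
      real_inner_smul_right, real_inner_self_eq_norm_sq]
    rw [real_inner_comm (u₀ x) (u₁ x), real_inner_comm (u₀ x) (R x),
      real_inner_comm (u₁ x) (R x)]
    ring
  rw [integral_sub (by exact hN.add h1) h0, integral_add hN h1] at hM
  have hG' : ∫ x, G x * F x ∂μ = ∫ x, F x * G x ∂μ := by simp only [mul_comm]
  have hD : ∫ x, (D₁ x - D₀ x) / Δt * F x ∂μ = (1 / Δt) * ∫ x, (D₁ x - D₀ x) * F x ∂μ := by
    rw [← integral_const_mul]
    congr 1
    funext x
    ring
  rw [hD, hG'] at hiii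
  have hpos : (1 / Δt) ≠ 0 := (one_div_pos.mpr hΔt).ne'
  have hMN := mul_left_cancel₀ hpos (by linarith :
    (1 / Δt) * ∫ x, ⟪D₁ x • (u₁ x + R x) - D₀ x • (u₀ x + R x),
        (1 / 2 : ℝ) • (u₀ x + u₁ x)⟫ ∂μ = (1 / Δt) * ∫ x, (D₁ x - D₀ x) * F x ∂μ)
  linarith
end

section
/- Let (Ω, μ) be a measure space, n ≥ 1 an integer, and Δt > 0 a real number. Let u₀, u₁ : Ω → ℝⁿ and D₀, D₁, S₀, S₁, Φ, E₀, E₁, F, G, T_D, T_S : Ω → ℝ be measurable functions such that every product of these functions appearing below is μ-integrable, and set u_{1/2} := (u₀ + u₁)/2. Assume: (i) the discrete-gradient relation (D₁ − D₀)·F + (S₁ − S₀)·G = (D₁ − D₀)·( (1/2) u₀·u₁ − Φ ) − (E₁ − E₀) holds μ-almost everywhere; (ii) the discrete momentum equation tested at u_{1/2} holds: (1/Δt) ∫_Ω ( D₁ u₁ − D₀ u₀ ) · u_{1/2} dμ + ∫_Ω F·T_D dμ + ∫_Ω G·T_S dμ = 0; (iii) the discrete continuity equation tested at F holds: ∫_Ω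 ((D₁ − D₀)/Δt)·F dμ + ∫_Ω T_D·F dμ = 0; (iv) the discrete entropy equation tested at G holds: ∫_Ω ((S₁ − S₀)/Δt)·G dμ + ∫_Ω T_S·G dμ = 0. Then the total energy is preserved: ∫_Ω ( (1/2) D₁ |u₁|² + E₁ + D₁ Φ ) dμ = ∫_Ω ( (1/2) D₀ |u₀|² + E₀ + D₀ Φ ) dμ. -/
open MeasureTheory
open scoped RealInnerProductSpace

theorem aux_sub {Ω : Type*} [MeasurableSpace Ω] {μ : Measure Ω} {f g : Ω → ℝ}
    (hf : Integrable f μ) (hg : Integrable g μ) : Integrable (fun x => f x - g x) μ :=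
  hf.sub hg

theorem aux_add {Ω : Type*} [MeasurableSpace Ω] {μ : Measure Ω} {f g : Ω → ℝ}
    (hf : Integrable f μ) (hg : Integrable g μ) : Integrable (fun x => f x + g x) μ :=
  hf.add hg

/-- Energy preservation of the variational time discretization of the baroclinic
(fully compressible) fluid (Section 6 of the paper, scheme (5.21)-(5.23)). -/
theorem energy_preservation_baroclinic
    {Ω : Type*} [MeasurableSpace Ω] (μ : Measure Ω) (n : ℕ) (hn : 1 ≤ n)
    (Δt : ℝ) (hΔt : 0 < Δt)
    (u₀ u₁ : Ω → EuclideanSpace ℝ (Fin n))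
    (D₀ D₁ S₀ S₁ Φ E₀ E₁ F G T_D T_S : Ω → ℝ)
    (hu₀ : Measurable u₀) (hu₁ : Measurable u₁)
    (hD₀ : Measurable D₀) (hD₁ : Measurable D₁)
    (hS₀ : Measurable S₀) (hS₁ : Measurable S₁) (hΦ : Measurable Φ)
    (hE₀ : Measurable E₀) (hE₁ : Measurable E₁)
    (hF : Measurable F) (hG : Measurable G)
    (hT_D : Measurable T_D) (hT_S : Measurable T_S)
    -- integrability of every product of these functions appearing below
    (hint₁ : Integrable (fun x => D₀ x * ‖u₀ x‖ ^ 2) μ)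
    (hint₂ : Integrable (fun x => D₁ x * ‖u₁ x‖ ^ 2) μ)
    (hint₃ : Integrable (fun x => D₀ x * ⟪u₀ x, u₁ x⟫) μ)
    (hint₄ : Integrable (fun x => D₁ x * ⟪u₀ x, u₁ x⟫) μ)
    (hint₅ : Integrable (fun x => D₀ x * Φ x) μ)
    (hint₆ : Integrable (fun x => D₁ x * Φ x) μ)
    (hintE₀ : Integrable E₀ μ) (hintE₁ : Integrable E₁ μ)
    (hintFTD : Integrable (fun x => F x * T_D x) μ)
    (hintGTS : Integrable (fun x => G x * T_S x) μ)
    (hintD₀F : Integrable (fun x => D₀ x * F x) μ)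
    (hintD₁F : Integrable (fun x => D₁ x * F x) μ)
    (hintS₀G : Integrable (fun x => S₀ x * G x) μ)
    (hintS₁G : Integrable (fun x => S₁ x * G x) μ)
    -- (i) the discrete-gradient relation, μ-almost everywhere
    (hi : ∀ᵐ x ∂μ, (D₁ x - D₀ x) * F x + (S₁ x - S₀ x) * G x =
      (D₁ x - D₀ x) * ((1 / 2) * ⟪u₀ x, u₁ x⟫ - Φ x) - (E₁ x - E₀ x))
    -- (ii) the discrete momentum equation tested at `u_{1/2}`
    (hii : (1 / Δt) * ∫ x, ⟪D₁ x • u₁ x - D₀ x • u₀ x,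
        (1 / 2 : ℝ) • (u₀ x + u₁ x)⟫ ∂μ
      + ∫ x, F x * T_D x ∂μ + ∫ x, G x * T_S x ∂μ = 0)
    -- (iii) the discrete continuity equation tested at `F`
    (hiii : ∫ x, (D₁ x - D₀ x) / Δt * F x ∂μ + ∫ x, T_D x * F x ∂μ = 0)
    -- (iv) the discrete entropy equation tested at `G`
    (hiv : ∫ x, (S₁ x - S₀ x) / Δt * G x ∂μ + ∫ x, T_S x * G x ∂μ = 0) :
    ∫ x, ((1 / 2) * D₁ x * ‖u₁ x‖ ^ 2 + E₁ x + D₁ x * Φ x) ∂μ =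
    ∫ x, ((1 / 2) * D₀ x * ‖u₀ x‖ ^ 2 + E₀ x + D₀ x * Φ x) ∂μ := by
  have hne : Δt ≠ 0 := hΔt.ne'
  have hA : ∀ x, ⟪D₁ x • u₁ x - D₀ x • u₀ x, (1 / 2 : ℝ) • (u₀ x + u₁ x)⟫
      = (((1 / 2) * (D₁ x * ‖u₁ x‖ ^ 2) - (1 / 2) * (D₀ x * ‖u₀ x‖ ^ 2))
        + ((1 / 2) * (D₁ x * ⟪u₀ x, u₁ x⟫) - (1 / 2) * (D₀ x * ⟪u₀ x, u₁ x⟫))) := by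
    intro x
    simp only [inner_sub_left, inner_smul_left, inner_smul_right, inner_add_right,
      real_inner_self_eq_norm_sq, real_inner_comm (u₀ x) (u₁ x), conj_trivial]
    ring
  have e1 : ∫ x, (D₁ x - D₀ x) / Δt * F x ∂μ
      = (1 / Δt) * ((∫ x, D₁ x * F x ∂μ) - ∫ x, D₀ x * F x ∂μ) := by
    rw [← integral_sub hintD₁F hintD₀F, ← integral_const_mul]
    congr 1; ext x; ring
  have e2 : ∫ x, (S₁ x - S₀ x) / Δt * G x ∂μ
      = (1 / Δt) * ((∫ x, S₁ x * G x ∂μ) - ∫ x, S₀ x * G x ∂μ) := by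
    rw [← integral_sub hintS₁G hintS₀G, ← integral_const_mul]
    congr 1; ext x; ring
  have e3 : ∫ x, T_D x * F x ∂μ = ∫ x, F x * T_D x ∂μ := by
    congr 1; ext x; ring
  have e4 : ∫ x, T_S x * G x ∂μ = ∫ x, G x * T_S x ∂μ := by
    congr 1; ext x; ring
  have e5 : ∫ x, ((D₁ x * F x - D₀ x * F x) + (S₁ x * G x - S₀ x * G x)) ∂μ
      = ∫ x, ((((1 / 2) * (D₁ x * ⟪u₀ x, u₁ x⟫) - (1 / 2) * (D₀ x * ⟪u₀ x, u₁ x⟫))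
        - (D₁ x * Φ x - D₀ x * Φ x)) - (E₁ x - E₀ x)) ∂μ := by
    apply integral_congr_ae
    filter_upwards [hi] with x hx
    linarith
  have k1 := hint₁.const_mul (1 / 2)
  have k2 := hint₂.const_mul (1 / 2)
  have k3 := hint₃.const_mul (1 / 2)
  have k4 := hint₄.const_mul (1 / 2)
  rw [integral_add (aux_sub hintD₁F hintD₀F) (aux_sub hintS₁G hintS₀G),
    integral_sub hintD₁F hintD₀F, integral_sub hintS₁G hintS₀G,
    integral_sub (aux_sub (aux_sub k4 k3) (aux_sub hint₆ hint₅)) (aux_sub hintE₁ hintE₀),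
    integral_sub (aux_sub k4 k3) (aux_sub hint₆ hint₅), integral_sub k4 k3,
    integral_sub hint₆ hint₅, integral_sub hintE₁ hintE₀] at e5
  simp only [hA] at hii
  rw [integral_add (aux_sub k2 k1) (aux_sub k4 k3), integral_sub k2 k1, integral_sub k4 k3] at hii
  rw [e1, e3] at hiii
  rw [e2, e4] at hiv
  simp only [mul_assoc (1 / 2 : ℝ)]
  rw [integral_add (aux_add k2 hintE₁) hint₆, integral_add k2 hintE₁,
    integral_add (aux_add k1 hintE₀) hint₅, integral_add k1 hintE₀]
  simp only [integral_const_mul] at hii e5 ⊢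
  field_simp at hii hiii hiv
  linarith
end
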